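/- arXiv:2603.00982 — 4 statements merged into one kernel-verified Lean document; each statement's English description precedes it below -/
import Mathlib

section
/- For every integer k ≥ 1 and every real a > 0, lim_{c → −∞} (−c)·ψ(c) = 1, where ψ(c) = [∫_0^∞ x·exp(cx − a·x^{k+1}/(k+1)!) dx]/[∫_0^∞ exp(cx − a·x^{k+1}/(k+1)!) dx]. In particular ψ(c) → 0 as c → −∞, so ψ(c)^{k+1} = o(1). -/
open Filter Set Topology MeasureTheory

/-- The heavy-traffic limiting constant
`ψ(c) = ∫_0^∞ x e^{c x - a x^{k+1}/(k+1)!} dx / ∫_0^∞ e^{c x - a x^{k+1}/(k+1)!} dx`. -/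
noncomputable def psiHT (k : ℕ) (a c : ℝ) : ℝ :=
  (∫ x in Set.Ioi (0 : ℝ),
      x * Real.exp (c * x - a * x ^ (k + 1) / (Nat.factorial (k + 1)))) /
  (∫ x in Set.Ioi (0 : ℝ),
      Real.exp (c * x - a * x ^ (k + 1) / (Nat.factorial (k + 1))))

/-!
Substituting `y = s * x` in the Laplace-type integral `∫ x ^ (p - 1) * exp (-(s * x)) * g x` over
`x > 0` and letting `s → ∞` replaces `g (y / s)` by the limit `L` of `g` at `0⁺`, so the integral is
asymptotic to `s ^ (-p) * Γ(p) * L`. If `L ≠ 0`, passing from `p` to `p + 1` multiplies it by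
`p / s` to leading order. For `s = -c`, `p = 1` and `g x = exp (-(a * x ^ (k + 1) / (k + 1)!))`
this is `ψ(c) ~ -1 / c`.
-/

section LaplaceIntegral

variable {E : Type*} [NormedAddCommGroup E] [NormedSpace ℝ E] {p s : ℝ}

theorem quasiMeasurePreserving_const_mul_restrict_Ioi_zero (hs : 0 < s) :
    Measure.QuasiMeasurePreserving (s * ·) (volume.restrict (Ioi (0 : ℝ)))
      (volume.restrict (Ioi 0)) := by
  have hvol : Measure.QuasiMeasurePreserving (s * ·) (volume : Measure ℝ) volume := by
    refine ⟨measurable_const_mul s, ?_⟩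
    rw [Real.map_volume_mul_left hs.ne']
    exact Measure.smul_absolutelyContinuous
  exact hvol.restrict fun _ hx => mul_pos hs hx

theorem rpow_smul_integral_rpow_mul_exp_neg_mul_smul (hs : 0 < s) (g : ℝ → E) :
    s ^ p • ∫ x in Ioi (0 : ℝ), (x ^ (p - 1) * Real.exp (-(s * x))) • g x =
      ∫ y in Ioi (0 : ℝ), (Real.exp (-y) * y ^ (p - 1)) • g (s⁻¹ * y) := by
  have hsubst := integral_comp_mul_left_Ioi
    (fun y => (Real.exp (-y) * y ^ (p - 1)) • g (s⁻¹ * y)) 0 hs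
  rw [mul_zero, eq_inv_smul_iff₀ hs.ne'] at hsubst
  rw [← hsubst, ← integral_smul, ← integral_smul]
  refine setIntegral_congr_fun measurableSet_Ioi fun x (hx : 0 < x) => ?_
  have hpow : s ^ p = s * s ^ (p - 1) := by
    rw [Real.rpow_sub_one hs.ne', mul_div_cancel₀ _ hs.ne']
  simp only [inv_mul_cancel_left₀ hs.ne', smul_smul, Real.mul_rpow hs.le hx.le, hpow]
  congr 1
  ring

theorem tendsto_rpow_smul_integral_rpow_mul_exp_neg_mul_smul [CompleteSpace E]
    {g : ℝ → E} {C : ℝ} {L : E} (hp : 0 < p)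
    (hmeas : AEStronglyMeasurable g (volume.restrict (Ioi 0)))
    (hbound : ∀ᵐ x ∂volume.restrict (Ioi 0), ‖g x‖ ≤ C) (hlim : Tendsto g (𝓝[>] 0) (𝓝 L)) :
    Tendsto (fun s : ℝ =>
        s ^ p • ∫ x in Ioi (0 : ℝ), (x ^ (p - 1) * Real.exp (-(s * x))) • g x)
      atTop (𝓝 (Real.Gamma p • L)) := by
  have hweight : IntegrableOn (fun y : ℝ => Real.exp (-y) * y ^ (p - 1)) (Ioi 0) :=
    Real.GammaIntegral_convergent hp
  have hrescaled : Tendsto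
      (fun s : ℝ => ∫ y in Ioi (0 : ℝ), (Real.exp (-y) * y ^ (p - 1)) • g (s⁻¹ * y))
      atTop (𝓝 (∫ y in Ioi (0 : ℝ), (Real.exp (-y) * y ^ (p - 1)) • L)) := by
    refine tendsto_integral_filter_of_dominated_convergence
      (fun y => Real.exp (-y) * y ^ (p - 1) * C) ?_ ?_ (hweight.mul_const C) ?_
    · filter_upwards [eventually_gt_atTop 0] with s hs
      exact hweight.aestronglyMeasurable.smul (hmeas.comp_quasiMeasurePreserving
        (quasiMeasurePreserving_const_mul_restrict_Ioi_zero (inv_pos.mpr hs)))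
    · filter_upwards [eventually_gt_atTop 0] with s hs
      filter_upwards [ae_restrict_mem measurableSet_Ioi,
        (quasiMeasurePreserving_const_mul_restrict_Ioi_zero (inv_pos.mpr hs)).ae hbound]
        with y (hy : 0 < y) hgy
      rw [norm_smul, Real.norm_of_nonneg (by positivity)]
      exact mul_le_mul_of_nonneg_left hgy (by positivity)
    · filter_upwards [ae_restrict_mem measurableSet_Ioi] with y (hy : 0 < y)
      have hscale : Tendsto (fun s : ℝ => s⁻¹ * y) atTop (𝓝[>] 0) := by
        refine tendsto_nhdsWithin_iff.mpr ⟨?_, ?_⟩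
        · simpa using tendsto_inv_atTop_zero.mul_const y
        · filter_upwards [eventually_gt_atTop 0] with s hs
          exact mul_pos (inv_pos.mpr hs) hy
      exact (hlim.comp hscale).const_smul _
  rw [integral_smul_const, ← Real.Gamma_eq_integral hp] at hrescaled
  refine hrescaled.congr' ?_
  filter_upwards [eventually_gt_atTop 0] with s hs
  exact (rpow_smul_integral_rpow_mul_exp_neg_mul_smul hs g).symm

theorem tendsto_mul_integral_rpow_mul_exp_neg_mul_div {g : ℝ → ℝ} {C L : ℝ} (hp : 0 < p)
    (hmeas : AEStronglyMeasurable g (volume.restrict (Ioi 0)))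
    (hbound : ∀ᵐ x ∂volume.restrict (Ioi 0), ‖g x‖ ≤ C) (hlim : Tendsto g (𝓝[>] 0) (𝓝 L))
    (hL : L ≠ 0) :
    Tendsto (fun s : ℝ => s * ((∫ x in Ioi (0 : ℝ), x ^ p * Real.exp (-(s * x)) * g x) /
        ∫ x in Ioi (0 : ℝ), x ^ (p - 1) * Real.exp (-(s * x)) * g x))
      atTop (𝓝 p) := by
  have hΓ : Real.Gamma p ≠ 0 := (Real.Gamma_pos_of_pos hp).ne'
  have hnum := tendsto_rpow_smul_integral_rpow_mul_exp_neg_mul_smul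
    (add_pos hp one_pos) hmeas hbound hlim
  have hden := tendsto_rpow_smul_integral_rpow_mul_exp_neg_mul_smul hp hmeas hbound hlim
  simp only [smul_eq_mul, add_sub_cancel_right] at hnum hden
  have hratio := hnum.div hden (mul_ne_zero hΓ hL)
  rw [mul_div_mul_right _ _ hL, Real.Gamma_add_one hp.ne', mul_div_cancel_right₀ _ hΓ] at hratio
  refine hratio.congr' ?_
  filter_upwards [eventually_gt_atTop 0] with s hs
  rw [Pi.div_apply, Real.rpow_add_one hs.ne', mul_assoc,
    mul_div_mul_left _ _ (Real.rpow_pos_of_pos hs p).ne', mul_div_assoc]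

end LaplaceIntegral

theorem psiHT_eq_integral_rpow_div_integral_rpow (k : ℕ) (a c : ℝ) :
    psiHT k a c =
      (∫ x in Ioi (0 : ℝ), x ^ (1 : ℝ) * Real.exp (-(-c * x)) *
          Real.exp (-(a * x ^ (k + 1) / (Nat.factorial (k + 1))))) /
        ∫ x in Ioi (0 : ℝ), x ^ ((1 : ℝ) - 1) * Real.exp (-(-c * x)) *
          Real.exp (-(a * x ^ (k + 1) / (Nat.factorial (k + 1)))) := by
  simp only [psiHT, Real.rpow_one, sub_self, Real.rpow_zero, one_mul, mul_assoc, ← Real.exp_add,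
    neg_mul, neg_neg, ← sub_eq_add_neg]

/-- `(-c) ψ(c) → 1` as `c → -∞`; in particular `ψ(c) → 0`,
so `ψ(c)^{k+1} = o(1)`. -/
theorem psi_asymptotics_atBot
    (k : ℕ) (hk : 1 ≤ k) (a : ℝ) (ha : 0 < a) :
    Tendsto (fun c : ℝ => (-c) * psiHT k a c) atBot (𝓝 1) ∧
    Tendsto (fun c : ℝ => psiHT k a c) atBot (𝓝 0) := by
  let g : ℝ → ℝ := fun x => Real.exp (-(a * x ^ (k + 1) / (Nat.factorial (k + 1))))
  have hcont : Continuous g := by fun_prop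
  have hbound : ∀ᵐ x ∂volume.restrict (Ioi 0), ‖g x‖ ≤ 1 := by
    filter_upwards [ae_restrict_mem measurableSet_Ioi] with x (hx : 0 < x)
    rw [Real.norm_eq_abs, Real.abs_exp, Real.exp_le_one_iff, neg_nonpos]
    positivity
  have hmain : Tendsto (fun c : ℝ => (-c) * psiHT k a c) atBot (𝓝 1) := by
    simp only [psiHT_eq_integral_rpow_div_integral_rpow]
    exact (tendsto_mul_integral_rpow_mul_exp_neg_mul_div one_pos hcont.aestronglyMeasurable hbound
      hcont.continuousWithinAt (Real.exp_ne_zero _)).comp tendsto_neg_atBot_atTop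
  refine ⟨hmain, (hmain.div_atTop tendsto_neg_atBot_atTop).congr' ?_⟩
  filter_upwards [eventually_lt_atBot 0] with c hc
  exact mul_div_cancel_left₀ _ (neg_ne_zero.mpr hc.ne)
end

section
/- Fix T > 0, β > 0 and an integer k ≥ 1, and set g(x) = −β·x^k for x ≥ 0. For every continuous function y : [0,T] → ℝ with y(0) ≥ 0 there exists a unique pair (x, ℓ) of continuous functions on [0,T] such that: (i) x(t) = y(t) + ∫_0^t g(x(s)) ds + ℓ(t) for all t ∈ [0,T]; (ii) x(t) ≥ 0 for all t ∈ [0,T]; (iii) ℓ is nondecreasing with ℓ(0) = 0; and (iv) ℓ is constant on every closed subinterval of [0,T] on which x is strictly positive. -/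
/-!
Let `Γ u t = u t + sup_{s ≤ t} max (-u s) 0` be the Skorokhod reflection of a path `u`. If `(x, ℓ)`
solves the Skorokhod problem for `u`, then after the last time at which `x` lies below another
reflected path, `x` is positive and `ℓ` is constant; hence `x` is monotone in `u 0` and in the
increments of `u`. It follows that `x = Γ u`, and, since a nonpositive drift only decreases
increments, that every solution of the reflected equation satisfies `0 ≤ x ≤ Γ y`. The drift may
therefore be truncated outside a compact interval to become globally Lipschitz. As `Γ` is
`2`-Lipschitz for running suprema, the solutions are then the fixed points of a Volterra-type map,
some iterate of which is a contraction.
-/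

open Filter Set Topology MeasureTheory

/-- `(x, ℓ)` solves the reflected (Skorokhod) integral equation on `[0,T]` with input
`y` and polynomial drift `g(x) = -β x^k`:
(i) `x(t) = y(t) + ∫_0^t g(x(s)) ds + ℓ(t)`;
(ii) `x ≥ 0`;
(iii) `ℓ` is nondecreasing with `ℓ(0) = 0`;
(iv) `ℓ` is constant on every closed subinterval of `[0,T]` on which `x > 0`. -/
def IsReflectedSolution (T β : ℝ) (k : ℕ) (y x ℓ : ℝ → ℝ) : Prop :=
  ContinuousOn x (Set.Icc 0 T) ∧
  ContinuousOn ℓ (Set.Icc 0 T) ∧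
  (∀ t ∈ Set.Icc (0 : ℝ) T,
    x t = y t + (∫ s in (0 : ℝ)..t, -β * (x s) ^ k) + ℓ t) ∧
  (∀ t ∈ Set.Icc (0 : ℝ) T, 0 ≤ x t) ∧
  MonotoneOn ℓ (Set.Icc 0 T) ∧
  ℓ 0 = 0 ∧
  (∀ s t : ℝ, 0 ≤ s → s ≤ t → t ≤ T →
    (∀ r ∈ Set.Icc s t, 0 < x r) → ℓ t = ℓ s)

section OrderTopology

variable {α β : Type*} [ConditionallyCompleteLinearOrder α] [TopologicalSpace α] [OrderTopology α]
  {a b : α}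

theorem exists_forall_mem_Ioc_lt [LinearOrder β] [TopologicalSpace β] [OrderClosedTopology β]
    {f g : α → β} (hab : a ≤ b) (hf : ContinuousOn f (Icc a b)) (hg : ContinuousOn g (Icc a b))
    (ha : f a ≤ g a) (hb : g b < f b) :
    ∃ s ∈ Ico a b, f s ≤ g s ∧ ∀ r ∈ Ioc s b, g r < f r := by
  have hclosed : IsClosed {r ∈ Icc a b | f r ≤ g r} := isClosed_Icc.isClosed_le hf hg
  obtain ⟨s, ⟨hs, hfg⟩, hmax⟩ :=
    (isCompact_Icc.of_isClosed_subset hclosed (sep_subset _ _)).exists_isGreatest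
      ⟨a, left_mem_Icc.2 hab, ha⟩
  refine ⟨s, ⟨hs.1, hs.2.lt_of_ne fun h => hb.not_ge (h ▸ hfg)⟩, hfg, fun r hr => ?_⟩
  by_contra! hle
  exact hr.1.not_ge (hmax ⟨⟨hs.1.trans hr.1.le, hr.2⟩, hle⟩)

theorem continuousOn_sSup_image_Icc [ConditionallyCompleteLinearOrder β]
    [TopologicalSpace β] [OrderTopology β] {f : α → β} (hf : ContinuousOn f (Icc a b)) :
    ContinuousOn (fun t => sSup (f '' Icc a t)) (Icc a b) := by
  rcases (Icc a b).eq_empty_or_nonempty with hempty | hne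
  · simp [hempty]
  have hab : a ≤ b := nonempty_Icc.1 hne
  set F : α → β := IccExtend hab ((Icc a b).domRestrict f)
  have hF : Continuous F := hf.domRestrict.Icc_extend'
  -- Over the fixed compact set `Icc a b`, the parameter `t` enters only through the function.
  have hsup : Continuous fun t => sSup ((fun s => F (min s t)) '' Icc a b) :=
    isCompact_Icc.continuous_sSup (f := fun t s => F (min s t)) (by fun_prop)
  refine hsup.continuousOn.congr fun t ht => congrArg sSup ?_
  have hmin : (fun s => min s t) '' Icc a b = Icc a t := by
    ext r
    constructor
    · rintro ⟨s, hs, rfl⟩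
      exact ⟨le_min hs.1 ht.1, min_le_right s t⟩
    · exact fun hr => ⟨r, ⟨hr.1, hr.2.trans ht.2⟩, min_eq_left hr.2⟩
  have hFf : EqOn F f (Icc a t) := fun r hr =>
    IccExtend_of_mem hab ((Icc a b).domRestrict f) ⟨hr.1, hr.2.trans ht.2⟩
  rw [← hFf.image_eq, ← hmin, image_image]

end OrderTopology

section Volterra

open scoped NNReal

variable {E : Type*} {T : ℝ} {K : ℝ≥0}

theorem dist_iterate_apply_le_of_volterra [PseudoMetricSpace E] (hT : 0 ≤ T)
    {Φ : C(Icc 0 T, E) → C(Icc 0 T, E)}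
    (hΦ : ∀ v w t, dist (Φ v t) (Φ w t) ≤
      K * ∫ s in (0 : ℝ)..t, dist (IccExtend hT v s) (IccExtend hT w s))
    (v w : C(Icc 0 T, E)) (n : ℕ) (t : Icc 0 T) :
    dist (Φ^[n] v t) (Φ^[n] w t) ≤ (K * t) ^ n / n.factorial * dist v w := by
  induction n generalizing t with
  | zero => simpa using ContinuousMap.dist_apply_le_dist t
  | succ n ih =>
    have hcont : Continuous fun s => dist (IccExtend hT (Φ^[n] v) s) (IccExtend hT (Φ^[n] w) s) :=
      (map_continuous _).Icc_extend'.dist (map_continuous _).Icc_extend'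
    rw [Function.iterate_succ_apply', Function.iterate_succ_apply']
    calc dist (Φ (Φ^[n] v) t) (Φ (Φ^[n] w) t)
        ≤ K * ∫ s in (0 : ℝ)..t, dist (IccExtend hT (Φ^[n] v) s) (IccExtend hT (Φ^[n] w) s) :=
          hΦ _ _ t
      _ ≤ K * ∫ s in (0 : ℝ)..t, (K * s) ^ n / n.factorial * dist v w := by
          gcongr
          refine intervalIntegral.integral_mono_on t.2.1 (hcont.intervalIntegrable _ _)
            (Continuous.intervalIntegrable (by fun_prop) _ _) fun s hs => ?_
          have hsT : s ∈ Icc 0 T := ⟨hs.1, hs.2.trans t.2.2⟩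
          simpa only [IccExtend_of_mem hT _ hsT] using ih ⟨s, hsT⟩
      _ = (K * t) ^ (n + 1) / (n + 1).factorial * dist v w := by
          simp only [mul_pow, div_eq_mul_inv, intervalIntegral.integral_mul_const,
            intervalIntegral.integral_const_mul, integral_pow, Nat.factorial_succ, Nat.cast_mul,
            Nat.cast_succ, mul_inv]
          ring

theorem existsUnique_isFixedPt_of_volterra [MetricSpace E] [CompleteSpace E] [Nonempty E]
    (hT : 0 ≤ T) {Φ : C(Icc 0 T, E) → C(Icc 0 T, E)}
    (hΦ : ∀ v w t, dist (Φ v t) (Φ w t) ≤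
      K * ∫ s in (0 : ℝ)..t, dist (IccExtend hT v s) (IccExtend hT w s)) :
    ∃! v, Function.IsFixedPt Φ v := by
  obtain ⟨n, hn⟩ := ((FloorSemiring.tendsto_pow_div_factorial_atTop (K * T)).eventually_lt_const
    zero_lt_one).exists
  have hnonneg : 0 ≤ (K * T) ^ n / n.factorial := by positivity
  have hcontr : ContractingWith ⟨_, hnonneg⟩ Φ^[n] := by
    refine ⟨hn, LipschitzWith.of_dist_le_mul fun v w => ?_⟩
    refine (ContinuousMap.dist_le (by positivity)).2 fun t => ?_
    have ht := t.2
    calc dist (Φ^[n] v t) (Φ^[n] w t) ≤ (K * t) ^ n / n.factorial * dist v w :=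
          dist_iterate_apply_le_of_volterra hT hΦ v w n t
      _ ≤ (K * T) ^ n / n.factorial * dist v w := by
          gcongr
          exacts [mul_nonneg K.2 ht.1, ht.2]
  have : Nonempty C(Icc 0 T, E) := ‹Nonempty E›.map (ContinuousMap.const _)
  exact ⟨_, hcontr.isFixedPt_fixedPoint_iterate, fun v hv =>
    hcontr.fixedPoint_unique (hv.iterate n)⟩

end Volterra

/-- `(x, ℓ)` solves the Skorokhod problem on `[0, T]` for the path `u`: it keeps `x = u + ℓ`
nonnegative by a nondecreasing regulator `ℓ` which stays constant while `x` is positive. The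
reflected integral equation is the case where `u` itself depends on `x`, see `driftPath`. -/
structure IsSkorokhodSolution (T : ℝ) (u x ℓ : ℝ → ℝ) : Prop where
  continuousOn : ContinuousOn x (Icc 0 T)
  continuousOn_regulator : ContinuousOn ℓ (Icc 0 T)
  eq_add : ∀ t ∈ Icc 0 T, x t = u t + ℓ t
  nonneg : ∀ t ∈ Icc 0 T, 0 ≤ x t
  monotoneOn : MonotoneOn ℓ (Icc 0 T)
  regulator_zero : ℓ 0 = 0
  eq_of_forall_pos : ∀ s t : ℝ, 0 ≤ s → s ≤ t → t ≤ T → (∀ r ∈ Icc s t, 0 < x r) → ℓ t = ℓ s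

namespace IsSkorokhodSolution

variable {T s t : ℝ} {u v x ℓ z m : ℝ → ℝ}

theorem congr (h : IsSkorokhodSolution T u x ℓ) (huv : EqOn u v (Icc 0 T)) :
    IsSkorokhodSolution T v x ℓ :=
  { h with eq_add := fun t ht => huv ht ▸ h.eq_add t ht }

theorem eq_of_forall_mem_Ioc_pos (h : IsSkorokhodSolution T u x ℓ) (hs : 0 ≤ s) (hst : s < t)
    (htT : t ≤ T) (hpos : ∀ r ∈ Ioc s t, 0 < x r) : ℓ t = ℓ s := by
  have hIoc : EqOn ℓ (fun _ => ℓ t) (Ioc s t) := fun r hr =>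
    (h.eq_of_forall_pos r t (hs.trans hr.1.le) hr.2 htT fun q hq =>
      hpos q ⟨hr.1.trans_le hq.1, hq.2⟩).symm
  have hIcc : EqOn ℓ (fun _ => ℓ t) (Icc s t) :=
    hIoc.of_subset_closure (h.continuousOn_regulator.mono (Icc_subset_Icc hs htT))
      continuousOn_const Ioc_subset_Icc_self (closure_Ioc hst.ne).ge
  exact (hIcc (left_mem_Icc.2 hst.le)).symm

theorem le_of_monotoneOn_sub (hx : IsSkorokhodSolution T u x ℓ) (hz : IsSkorokhodSolution T v z m)
    (hzero : u 0 ≤ v 0) (hmono : MonotoneOn (v - u) (Icc 0 T)) (ht : t ∈ Icc 0 T) : x t ≤ z t := by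
  by_contra! hlt
  have hsub : Icc 0 t ⊆ Icc 0 T := Icc_subset_Icc_right ht.2
  have hxz_zero : x 0 ≤ z 0 := by
    have h0 : (0 : ℝ) ∈ Icc 0 T := left_mem_Icc.2 (ht.1.trans ht.2)
    simpa [hx.eq_add 0 h0, hz.eq_add 0 h0, hx.regulator_zero, hz.regulator_zero] using hzero
  obtain ⟨s, hs, hxz, hzx⟩ := exists_forall_mem_Ioc_lt ht.1 (hx.continuousOn.mono hsub)
    (hz.continuousOn.mono hsub) hxz_zero hlt
  have hsT : s ∈ Icc 0 T := hsub (Ico_subset_Icc_self hs)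
  have hℓ : ℓ t = ℓ s := hx.eq_of_forall_mem_Ioc_pos hs.1 hs.2 ht.2 fun r hr =>
    (hz.nonneg r ⟨hs.1.trans hr.1.le, hr.2.trans ht.2⟩).trans_lt (hzx r hr)
  have hm : m s ≤ m t := hz.monotoneOn hsT ht hs.2.le
  have huv : v s - u s ≤ v t - u t := hmono hsT ht hs.2.le
  linarith [hx.eq_add s hsT, hx.eq_add t ht, hz.eq_add s hsT, hz.eq_add t ht]

theorem eqOn (hx : IsSkorokhodSolution T u x ℓ) (hz : IsSkorokhodSolution T u z m) :
    EqOn x z (Icc 0 T) := fun _ ht =>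
  have hmono : MonotoneOn (u - u) (Icc 0 T) := fun _ _ _ _ _ => by simp
  le_antisymm (hx.le_of_monotoneOn_sub hz le_rfl hmono ht)
    (hz.le_of_monotoneOn_sub hx le_rfl hmono ht)

theorem eqOn_regulator (hx : IsSkorokhodSolution T u x ℓ) (hz : IsSkorokhodSolution T u z m) :
    EqOn ℓ m (Icc 0 T) := fun t ht => by
  linarith [hx.eqOn hz ht, hx.eq_add t ht, hz.eq_add t ht]

end IsSkorokhodSolution

/-- The Skorokhod regulator of a path `u`, the least nondecreasing process which, added to `u`,
keeps it nonnegative; it is `-inf_{0 ≤ s ≤ t} min (u s) 0`, written as a running supremum. -/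
noncomputable def skorokhodRegulator (u : ℝ → ℝ) (t : ℝ) : ℝ :=
  sSup ((fun s => max (-u s) 0) '' Icc 0 t)

/-- The Skorokhod reflection map `Γ`, whose value at `u` is `u` reflected at `0`. -/
noncomputable def skorokhodMap (u : ℝ → ℝ) (t : ℝ) : ℝ :=
  u t + skorokhodRegulator u t

section SkorokhodMap

variable {T s t c : ℝ} {u v : ℝ → ℝ}

theorem continuousOn_skorokhodRegulator (hu : ContinuousOn u (Icc 0 T)) :
    ContinuousOn (skorokhodRegulator u) (Icc 0 T) :=
  continuousOn_sSup_image_Icc (hu.neg.sup continuousOn_const)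

theorem continuousOn_skorokhodMap (hu : ContinuousOn u (Icc 0 T)) :
    ContinuousOn (skorokhodMap u) (Icc 0 T) :=
  hu.add (continuousOn_skorokhodRegulator hu)

theorem max_neg_le_skorokhodRegulator (hu : ContinuousOn u (Icc 0 t)) (hs : s ∈ Icc 0 t) :
    max (-u s) 0 ≤ skorokhodRegulator u t :=
  le_csSup (isCompact_Icc.image_of_continuousOn (hu.neg.sup continuousOn_const)).bddAbove
    (mem_image_of_mem _ hs)

theorem exists_skorokhodRegulator_eq (hu : ContinuousOn u (Icc 0 t)) (ht : 0 ≤ t) :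
    ∃ s ∈ Icc 0 t, skorokhodRegulator u t = max (-u s) 0 :=
  isCompact_Icc.exists_sSup_image_eq (nonempty_Icc.2 ht) (hu.neg.sup continuousOn_const)

theorem monotoneOn_skorokhodRegulator (hu : ContinuousOn u (Icc 0 T)) :
    MonotoneOn (skorokhodRegulator u) (Icc 0 T) := fun s hs t ht hst => by
  obtain ⟨r, hr, hr_eq⟩ :=
    exists_skorokhodRegulator_eq (hu.mono (Icc_subset_Icc_right hs.2)) hs.1
  exact hr_eq.trans_le (max_neg_le_skorokhodRegulator (hu.mono (Icc_subset_Icc_right ht.2))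
    ⟨hr.1, hr.2.trans hst⟩)

theorem skorokhodMap_nonneg (hu : ContinuousOn u (Icc 0 t)) (ht : 0 ≤ t) :
    0 ≤ skorokhodMap u t := by
  have hle := max_neg_le_skorokhodRegulator hu (right_mem_Icc.2 ht)
  rw [skorokhodMap]
  linarith [le_max_left (-u t) 0]

theorem skorokhodRegulator_eq_of_forall_pos (hu : ContinuousOn u (Icc 0 t)) (hs : 0 ≤ s)
    (hst : s ≤ t) (hpos : ∀ r ∈ Icc s t, 0 < skorokhodMap u r) :
    skorokhodRegulator u t = skorokhodRegulator u s := by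
  have hmono := monotoneOn_skorokhodRegulator hu
  have hus : ContinuousOn u (Icc 0 s) := hu.mono (Icc_subset_Icc_right hst)
  have ht : t ∈ Icc 0 t := right_mem_Icc.2 (hs.trans hst)
  refine le_antisymm ?_ (hmono ⟨hs, hst⟩ ht hst)
  obtain ⟨r, hr, hr_eq⟩ := exists_skorokhodRegulator_eq hu ht.1
  rcases le_total r s with hrs | hsr
  · exact hr_eq.trans_le (max_neg_le_skorokhodRegulator hus ⟨hr.1, hrs⟩)
  · -- The supremum is attained at a time `r` of positivity, so it cannot be `-u r`.
    have hlt : -u r < skorokhodRegulator u t :=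
      calc -u r < skorokhodRegulator u r := neg_lt_iff_pos_add'.2 (hpos r ⟨hsr, hr.2⟩)
        _ ≤ skorokhodRegulator u t := hmono hr ht hr.2
    have hzero : skorokhodRegulator u t = 0 := by
      rcases max_choice (-u r) 0 with hmax | hmax
      · exact absurd (hr_eq.trans hmax) hlt.ne'
      · exact hr_eq.trans hmax
    rw [hzero]
    exact (le_max_right _ _).trans (max_neg_le_skorokhodRegulator hus (right_mem_Icc.2 hs))

theorem isSkorokhodSolution_skorokhodMap (hu : ContinuousOn u (Icc 0 T)) (hu0 : 0 ≤ u 0) :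
    IsSkorokhodSolution T u (skorokhodMap u) (skorokhodRegulator u) where
  continuousOn := continuousOn_skorokhodMap hu
  continuousOn_regulator := continuousOn_skorokhodRegulator hu
  eq_add _ _ := rfl
  nonneg t ht := skorokhodMap_nonneg (hu.mono (Icc_subset_Icc_right ht.2)) ht.1
  monotoneOn := monotoneOn_skorokhodRegulator hu
  regulator_zero := by simp [skorokhodRegulator, hu0]
  eq_of_forall_pos s t hs hst htT hpos :=
    skorokhodRegulator_eq_of_forall_pos (hu.mono (Icc_subset_Icc_right htT)) hs hst hpos

theorem skorokhodRegulator_le_add (hu : ContinuousOn u (Icc 0 t)) (hv : ContinuousOn v (Icc 0 t))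
    (ht : 0 ≤ t) (huv : ∀ s ∈ Icc 0 t, |u s - v s| ≤ c) :
    skorokhodRegulator u t ≤ skorokhodRegulator v t + c := by
  obtain ⟨r, hr, hr_eq⟩ := exists_skorokhodRegulator_eq hu ht
  calc skorokhodRegulator u t = max (-u r) 0 := hr_eq
    _ ≤ max (-v r) 0 + |u r - v r| := by grind
    _ ≤ skorokhodRegulator v t + c :=
        add_le_add (max_neg_le_skorokhodRegulator hv hr) (huv r hr)

theorem abs_skorokhodMap_sub_le (hu : ContinuousOn u (Icc 0 t)) (hv : ContinuousOn v (Icc 0 t))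
    (ht : 0 ≤ t) (huv : ∀ s ∈ Icc 0 t, |u s - v s| ≤ c) :
    |skorokhodMap u t - skorokhodMap v t| ≤ 2 * c := by
  have hreg : |skorokhodRegulator u t - skorokhodRegulator v t| ≤ c := by
    refine abs_sub_le_iff.2 ⟨sub_le_iff_le_add'.2 (skorokhodRegulator_le_add hu hv ht huv),
      sub_le_iff_le_add'.2 (skorokhodRegulator_le_add hv hu ht fun s hs => ?_)⟩
    exact abs_sub_comm (u s) (v s) ▸ huv s hs
  calc |skorokhodMap u t - skorokhodMap v t|
      = |(u t - v t) + (skorokhodRegulator u t - skorokhodRegulator v t)| := by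
        rw [skorokhodMap, skorokhodMap, add_sub_add_comm]
    _ ≤ c + c := (abs_add_le _ _).trans (add_le_add (huv t (right_mem_Icc.2 ht)) hreg)
    _ = 2 * c := (two_mul c).symm

end SkorokhodMap

/-- The path `t ↦ y t + ∫ s in 0..t, g (x s)` driven by the input `y` and the drift `g` along `x`.
A pair `(x, ℓ)` solves the reflected integral equation with drift `g` when it solves the Skorokhod
problem for `driftPath g y x`. -/
noncomputable def driftPath (g y x : ℝ → ℝ) (t : ℝ) : ℝ :=
  y t + ∫ s in (0 : ℝ)..t, g (x s)

section DriftPath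

open scoped NNReal

variable {T s t : ℝ} {K : ℝ≥0} {g h x z : ℝ → ℝ}

@[simp]
theorem driftPath_zero (g y x : ℝ → ℝ) : driftPath g y x 0 = y 0 := by
  simp [driftPath]

theorem eqOn_driftPath (y : ℝ → ℝ) (hxz : ∀ s ∈ Icc 0 T, g (x s) = h (z s)) :
    EqOn (driftPath g y x) (driftPath h y z) (Icc 0 T) := fun t ht => by
  refine congrArg (y t + ·) (intervalIntegral.integral_congr fun s hs => hxz s ?_)
  rw [uIcc_of_le ht.1] at hs
  exact ⟨hs.1, hs.2.trans ht.2⟩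

theorem continuousOn_driftPath {y : ℝ → ℝ} (hy : ContinuousOn y (Icc 0 T))
    (hgx : ContinuousOn (g ∘ x) (Icc 0 T)) : ContinuousOn (driftPath g y x) (Icc 0 T) := by
  rcases le_total 0 T with hT | hT
  · rw [← uIcc_of_le hT] at hy hgx ⊢
    exact hy.add (intervalIntegral.continuousOn_primitive_interval
      (hgx.integrableOn_compact isCompact_uIcc))
  · exact (subsingleton_Icc_of_ge hT).continuousOn _

theorem monotoneOn_sub_driftPath (y : ℝ → ℝ) (hgx : ContinuousOn (g ∘ x) (Icc 0 T))
    (hg : ∀ t ∈ Icc 0 T, g (x t) ≤ 0) : MonotoneOn (y - driftPath g y x) (Icc 0 T) := by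
  intro s hs t ht hst
  have hint {a b : ℝ} (ha : a ∈ Icc 0 T) (hb : b ∈ Icc 0 T) :
      IntervalIntegrable (fun r => g (x r)) volume a b :=
    (hgx.mono (ordConnected_Icc.uIcc_subset ha hb)).intervalIntegrable
  have h0 : (0 : ℝ) ∈ Icc 0 T := left_mem_Icc.2 (hs.1.trans hs.2)
  have hadd := intervalIntegral.integral_add_adjacent_intervals (hint h0 hs) (hint hs ht)
  have hnonpos : ∫ r in s..t, g (x r) ≤ ∫ _ in s..t, 0 :=
    intervalIntegral.integral_mono_on hst (hint hs ht) intervalIntegrable_const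
      fun r hr => hg r ⟨hs.1.trans hr.1, hr.2.trans ht.2⟩
  rw [intervalIntegral.integral_zero] at hnonpos
  simp only [Pi.sub_apply, driftPath]
  linarith

theorem abs_driftPath_sub_le (hg : LipschitzWith K g) (y : ℝ → ℝ) (hx : ContinuousOn x (Icc 0 t))
    (hz : ContinuousOn z (Icc 0 t)) (hs : s ∈ Icc 0 t) :
    |driftPath g y x s - driftPath g y z s| ≤ K * ∫ r in (0 : ℝ)..t, |x r - z r| := by
  have hst : uIcc 0 s ⊆ Icc 0 t := uIcc_of_le hs.1 ▸ Icc_subset_Icc_right hs.2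
  have hgx : IntervalIntegrable (fun r => g (x r)) volume 0 s :=
    ((hg.continuous.comp_continuousOn hx).mono hst).intervalIntegrable
  have hgz : IntervalIntegrable (fun r => g (z r)) volume 0 s :=
    ((hg.continuous.comp_continuousOn hz).mono hst).intervalIntegrable
  have habs : ContinuousOn (fun r => |x r - z r|) (Icc 0 t) := (hx.sub hz).abs
  calc |driftPath g y x s - driftPath g y z s| = |∫ r in (0 : ℝ)..s, (g (x r) - g (z r))| := by
        rw [driftPath, driftPath, add_sub_add_left_eq_sub, ← intervalIntegral.integral_sub hgx hgz]
    _ ≤ ∫ r in (0 : ℝ)..s, |g (x r) - g (z r)| :=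
        intervalIntegral.abs_integral_le_integral_abs hs.1
    _ ≤ ∫ r in (0 : ℝ)..s, K * |x r - z r| :=
        intervalIntegral.integral_mono_on hs.1 (hgx.sub hgz).abs
          ((habs.mono hst).intervalIntegrable.const_mul _) fun r _ => hg.dist_le_mul (x r) (z r)
    _ = K * ∫ r in (0 : ℝ)..s, |x r - z r| := intervalIntegral.integral_const_mul _ _
    _ ≤ K * ∫ r in (0 : ℝ)..t, |x r - z r| := by
        refine mul_le_mul_of_nonneg_left (intervalIntegral.integral_mono_interval le_rfl hs.1 hs.2
          (ae_of_all _ fun r => abs_nonneg (x r - z r)) ?_) K.2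
        exact ContinuousOn.intervalIntegrable_of_Icc (hs.1.trans hs.2) habs

end DriftPath

section Lipschitz

open scoped NNReal

variable {T : ℝ} {K : ℝ≥0} {g y : ℝ → ℝ}

/-- The Picard operator `x ↦ Γ (driftPath g y x)` of the reflected integral equation. Its argument
is extended from `[0, T]` to `ℝ` by constants, which does not affect the values on `[0, T]`. -/
noncomputable def reflectedPicard (hT : 0 ≤ T) (hg : Continuous g) (hy : ContinuousOn y (Icc 0 T))
    (v : C(Icc 0 T, ℝ)) : C(Icc 0 T, ℝ) where
  toFun := (Icc 0 T).domRestrict (skorokhodMap (driftPath g y (IccExtend hT v)))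
  continuous_toFun :=
    (continuousOn_skorokhodMap (continuousOn_driftPath hy
      (hg.comp v.continuous.Icc_extend').continuousOn)).domRestrict

theorem dist_reflectedPicard_apply_le (hT : 0 ≤ T) (hg : LipschitzWith K g)
    (hy : ContinuousOn y (Icc 0 T)) (v w : C(Icc 0 T, ℝ)) (t : Icc 0 T) :
    dist (reflectedPicard hT hg.continuous hy v t) (reflectedPicard hT hg.continuous hy w t) ≤
      (2 * K : ℝ≥0) * ∫ s in (0 : ℝ)..t, dist (IccExtend hT v s) (IccExtend hT w s) := by
  have hext (p : C(Icc 0 T, ℝ)) : Continuous (IccExtend hT p) := p.continuous.Icc_extend'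
  have hpath (p : C(Icc 0 T, ℝ)) : ContinuousOn (driftPath g y (IccExtend hT p)) (Icc 0 t) :=
    (continuousOn_driftPath hy (hg.continuous.comp (hext p)).continuousOn).mono
      (Icc_subset_Icc_right t.2.2)
  push_cast
  rw [mul_assoc]
  exact abs_skorokhodMap_sub_le (hpath v) (hpath w) t.2.1 fun s hs =>
    abs_driftPath_sub_le hg y (hext v).continuousOn (hext w).continuousOn hs

theorem IsSkorokhodSolution.isFixedPt_reflectedPicard (hT : 0 ≤ T) (hg : Continuous g)
    (hy : ContinuousOn y (Icc 0 T)) (hy0 : 0 ≤ y 0) {x ℓ : ℝ → ℝ}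
    (h : IsSkorokhodSolution T (driftPath g y x) x ℓ) :
    Function.IsFixedPt (reflectedPicard hT hg hy)
      ⟨(Icc 0 T).domRestrict x, h.continuousOn.domRestrict⟩ := by
  set X : C(Icc 0 T, ℝ) := ⟨(Icc 0 T).domRestrict x, h.continuousOn.domRestrict⟩
  have hX : EqOn x (IccExtend hT X) (Icc 0 T) := fun t ht => (IccExtend_of_mem hT X ht).symm
  have hsol : IsSkorokhodSolution T (driftPath g y (IccExtend hT X)) x ℓ :=
    h.congr (eqOn_driftPath y fun s hs => congrArg g (hX hs))
  have hpath : ContinuousOn (driftPath g y (IccExtend hT X)) (Icc 0 T) :=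
    continuousOn_driftPath hy (hg.comp X.continuous.Icc_extend').continuousOn
  ext t
  exact ((isSkorokhodSolution_skorokhodMap hpath (by simpa using hy0)).eqOn hsol) t.2

theorem exists_isSkorokhodSolution_of_isFixedPt_reflectedPicard (hT : 0 ≤ T) (hg : Continuous g)
    (hy : ContinuousOn y (Icc 0 T)) (hy0 : 0 ≤ y 0) {v : C(Icc 0 T, ℝ)}
    (hv : Function.IsFixedPt (reflectedPicard hT hg hy) v) :
    ∃ x ℓ, IsSkorokhodSolution T (driftPath g y x) x ℓ := by
  set u := driftPath g y (IccExtend hT v)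
  have hu : ContinuousOn u (Icc 0 T) :=
    continuousOn_driftPath hy (hg.comp v.continuous.Icc_extend').continuousOn
  refine ⟨_, _, (isSkorokhodSolution_skorokhodMap hu (by simpa [u] using hy0)).congr
    (eqOn_driftPath y fun s hs => congrArg g ?_)⟩
  rw [IccExtend_of_mem hT v hs]
  exact (DFunLike.congr_fun hv ⟨s, hs⟩).symm

theorem exists_unique_isSkorokhodSolution_driftPath_of_lipschitzWith (hT : 0 ≤ T)
    (hg : LipschitzWith K g) (hy : ContinuousOn y (Icc 0 T)) (hy0 : 0 ≤ y 0) :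
    ∃ x ℓ : ℝ → ℝ, IsSkorokhodSolution T (driftPath g y x) x ℓ ∧
      ∀ x' ℓ' : ℝ → ℝ, IsSkorokhodSolution T (driftPath g y x') x' ℓ' →
        ∀ t ∈ Icc 0 T, x' t = x t ∧ ℓ' t = ℓ t := by
  obtain ⟨v, hv, huniq⟩ :=
    existsUnique_isFixedPt_of_volterra hT (dist_reflectedPicard_apply_le hT hg hy)
  obtain ⟨x, ℓ, hsol⟩ :=
    exists_isSkorokhodSolution_of_isFixedPt_reflectedPicard hT hg.continuous hy hy0 hv
  refine ⟨x, ℓ, hsol, fun x' ℓ' hsol' => ?_⟩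
  have hx : EqOn x' x (Icc 0 T) := fun t ht =>
    DFunLike.congr_fun ((huniq _ (hsol'.isFixedPt_reflectedPicard hT hg.continuous hy hy0)).trans
      (huniq _ (hsol.isFixedPt_reflectedPicard hT hg.continuous hy hy0)).symm) ⟨t, ht⟩
  have hsol'_path : IsSkorokhodSolution T (driftPath g y x) x' ℓ' :=
    hsol'.congr (eqOn_driftPath y fun s hs => congrArg g (hx hs))
  exact fun t ht => ⟨hx ht, hsol'_path.eqOn_regulator hsol ht⟩

end Lipschitz

section NonposDrift

variable {T M : ℝ} {g h y x ℓ : ℝ → ℝ}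

theorem IsSkorokhodSolution.le_skorokhodMap (hsol : IsSkorokhodSolution T (driftPath g y x) x ℓ)
    (hg : ContinuousOn g (Ici 0)) (hg_nonpos : ∀ z ∈ Ici 0, g z ≤ 0)
    (hy : ContinuousOn y (Icc 0 T)) (hy0 : 0 ≤ y 0) {t : ℝ} (ht : t ∈ Icc 0 T) :
    x t ≤ skorokhodMap y t :=
  hsol.le_of_monotoneOn_sub (isSkorokhodSolution_skorokhodMap hy hy0) (driftPath_zero g y x).le
    (monotoneOn_sub_driftPath y (hg.comp hsol.continuousOn hsol.nonneg) fun s hs =>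
      hg_nonpos (x s) (hsol.nonneg s hs)) ht

theorem IsSkorokhodSolution.congr_drift (hsol : IsSkorokhodSolution T (driftPath g y x) x ℓ)
    (hg : ContinuousOn g (Ici 0)) (hg_nonpos : ∀ z ∈ Ici 0, g z ≤ 0)
    (hy : ContinuousOn y (Icc 0 T)) (hy0 : 0 ≤ y 0) (hM : ∀ t ∈ Icc 0 T, skorokhodMap y t ≤ M)
    (hgh : EqOn g h (Icc 0 M)) : IsSkorokhodSolution T (driftPath h y x) x ℓ :=
  hsol.congr (eqOn_driftPath y fun s hs => hgh ⟨hsol.nonneg s hs,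
    (hsol.le_skorokhodMap hg hg_nonpos hy hy0 hs).trans (hM s hs)⟩)

theorem reflected_integral_equation_exists_unique_general (hT : 0 ≤ T)
    (hg : LocallyLipschitzOn (Ici 0) g) (hg_nonpos : ∀ z ∈ Ici 0, g z ≤ 0)
    (hy : ContinuousOn y (Icc 0 T)) (hy0 : 0 ≤ y 0) :
    ∃ x ℓ : ℝ → ℝ, IsSkorokhodSolution T (driftPath g y x) x ℓ ∧
      ∀ x' ℓ' : ℝ → ℝ, IsSkorokhodSolution T (driftPath g y x') x' ℓ' →
        ∀ t ∈ Icc 0 T, x' t = x t ∧ ℓ' t = ℓ t := by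
  obtain ⟨M, hM⟩ := (isCompact_Icc.image_of_continuousOn (continuousOn_skorokhodMap hy)).bddAbove
  have hΓM : ∀ t ∈ Icc 0 T, skorokhodMap y t ≤ M := fun t ht => hM (mem_image_of_mem _ ht)
  have h0 : (0 : ℝ) ∈ Icc 0 T := left_mem_Icc.2 hT
  have hM0 : 0 ≤ M := ((isSkorokhodSolution_skorokhodMap hy hy0).nonneg 0 h0).trans (hΓM 0 h0)
  have hgM : LocallyLipschitzOn (Icc 0 M) g := hg.mono Icc_subset_Ici_self
  obtain ⟨K, hK⟩ := hgM.exists_lipschitzOnWith_of_compact isCompact_Icc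
  set h : ℝ → ℝ := IccExtend hM0 ((Icc 0 M).domRestrict g)
  have hh : LipschitzWith (K * 1) h := hK.to_restrict.comp (LipschitzWith.projIcc hM0)
  have hgh : EqOn g h (Icc 0 M) := fun z hz =>
    (IccExtend_of_mem hM0 ((Icc 0 M).domRestrict g) hz).symm
  have hh_nonpos : ∀ z ∈ Ici 0, h z ≤ 0 := fun z _ => hg_nonpos _ (projIcc 0 M hM0 z).2.1
  obtain ⟨x, ℓ, hsol, huniq⟩ :=
    exists_unique_isSkorokhodSolution_driftPath_of_lipschitzWith hT hh hy hy0
  exact ⟨x, ℓ, hsol.congr_drift hh.continuous.continuousOn hh_nonpos hy hy0 hΓM hgh.symm,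
    fun x' ℓ' hsol' => huniq x' ℓ' (hsol'.congr_drift hg.continuousOn hg_nonpos hy hy0 hΓM hgh)⟩

end NonposDrift

theorem locallyLipschitz_const_mul_pow (c : ℝ) (k : ℕ) :
    LocallyLipschitz fun z : ℝ => c * z ^ k :=
  ContDiff.locallyLipschitz (𝕂 := ℝ) (by fun_prop)

theorem neg_mul_pow_nonpos {β : ℝ} (hβ : 0 ≤ β) (k : ℕ) : ∀ z ∈ Ici (0 : ℝ), -β * z ^ k ≤ 0 :=
  fun _ hz => mul_nonpos_of_nonpos_of_nonneg (neg_nonpos.2 hβ) (pow_nonneg hz k)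

theorem isReflectedSolution_iff {T β : ℝ} {k : ℕ} {y x ℓ : ℝ → ℝ} :
    IsReflectedSolution T β k y x ℓ ↔
      IsSkorokhodSolution T (driftPath (fun z => -β * z ^ k) y x) x ℓ :=
  ⟨fun ⟨hx, hℓ, heq, hnonneg, hmono, hzero, hconst⟩ =>
      ⟨hx, hℓ, heq, hnonneg, hmono, hzero, hconst⟩,
    fun ⟨hx, hℓ, heq, hnonneg, hmono, hzero, hconst⟩ =>
      ⟨hx, hℓ, heq, hnonneg, hmono, hzero, hconst⟩⟩

/-- existence and uniqueness for the reflected integral equation with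
polynomial drift `g(x) = -β x^k`: for every continuous input `y : [0,T] → ℝ` with
`y(0) ≥ 0`, there is a unique pair `(x, ℓ)` of continuous functions on `[0,T]`
satisfying (i)–(iv) (uniqueness in the sense of agreement on `[0,T]`). -/
theorem reflected_integral_equation_exists_unique
    (T β : ℝ) (k : ℕ) (hT : 0 < T) (hβ : 0 < β) (hk : 1 ≤ k)
    (y : ℝ → ℝ) (hy : ContinuousOn y (Set.Icc 0 T)) (hy0 : 0 ≤ y 0) :
    ∃ x ℓ : ℝ → ℝ,
      IsReflectedSolution T β k y x ℓ ∧
      ∀ x' ℓ' : ℝ → ℝ, IsReflectedSolution T β k y x' ℓ' →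
        ∀ t ∈ Set.Icc (0 : ℝ) T, x' t = x t ∧ ℓ' t = ℓ t := by
  simpa only [isReflectedSolution_iff] using
    reflected_integral_equation_exists_unique_general hT.le
      (locallyLipschitz_const_mul_pow (-β) k).locallyLipschitzOn
      (neg_mul_pow_nonpos hβ.le k) hy hy0
end

section
/- Fix T > 0, β > 0 and an integer k ≥ 1, and set g(x) = −β·x^k for x ≥ 0. Let y₁, y₂ : [0,T] → ℝ be continuous with y₁(0) ≥ 0 and y₂(0) ≥ 0, and let (x₁, ℓ₁) and (x₂, ℓ₂) be the corresponding solutions of the reflected integral equation xᵢ(t) = yᵢ(t) + ∫_0^t g(xᵢ(s)) ds + ℓᵢ(t) with xᵢ ≥ 0, ℓᵢ nondecreasing, ℓᵢ(0) = 0, and ℓᵢ constant on every closed subinterval on which xᵢ is strictly positive. If R > 0 satisfies sup_{0 ≤ t ≤ T} x₁(t) ≤ R and sup_{0 ≤ t ≤ T} x₂(t) ≤ R, and L = β·k·R^{k−1}, then sup_{0 ≤ t ≤ T} |x₁(t) − x₂(t)| ≤ 2·e^{2LT}·sup_{0 ≤ t ≤ T} |y₁(t) − y₂(t)|. -/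
open Filter Set Topology MeasureTheory

/-!
Let `s` be the last time before `t` at which `x₁ ≤ x₂`, or `s = 0` if there is none. On `(s, t]` we
have `x₁ > x₂ ≥ 0`, so the first regulator is idle while the second can only push `x₂` upwards, and
the drift, being nonincreasing, also pulls `x₁` towards `x₂`. Hence `x₁ - x₂` grows over `[s, t]` by
no more than `y₁ - y₂` does. It starts from a value `≤ 0` at time `s`, or from `y₁ 0 - y₂ 0` if
`s = 0`, so it ends below twice the distance of the inputs. No Grönwall estimate enters: the
constant is `2` instead of `2 * exp (2 * L * T)`.
-/

lemma exists_mem_Icc_forall_mem_Ioc_lt {α β : Type*} [ConditionallyCompleteLinearOrder α]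
    [TopologicalSpace α] [OrderTopology α] [LinearOrder β] [TopologicalSpace β]
    [OrderClosedTopology β] {f g : α → β} {a b : α} (hab : a ≤ b)
    (hf : ContinuousOn f (Icc a b)) (hg : ContinuousOn g (Icc a b)) :
    ∃ s ∈ Icc a b, (s = a ∨ f s ≤ g s) ∧ ∀ r ∈ Ioc s b, g r < f r := by
  have hcompact : IsCompact (insert a {r ∈ Icc a b | f r ≤ g r}) :=
    (isCompact_Icc.of_isClosed_subset (isClosed_Icc.isClosed_le hf hg) (sep_subset _ _)).insert a
  obtain ⟨s, hs, hmax⟩ := hcompact.exists_isGreatest (insert_nonempty _ _)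
  have hsab : s ∈ Icc a b := insert_subset (left_mem_Icc.mpr hab) (sep_subset _ _) hs
  refine ⟨s, hsab, hs.imp_right And.right, fun r hr => not_le.mp fun hle => ?_⟩
  exact hr.1.not_ge (hmax (.inr ⟨⟨hsab.1.trans hr.1.le, hr.2⟩, hle⟩))

/-- `(x, ℓ)` solves the one-dimensional Skorokhod problem on `[0, T]` for the free path `u`: the
regulator `ℓ` is the pushing that keeps `x = u + ℓ` nonnegative. That `ℓ` acts only while `x = 0`
is encoded, as in `IsReflectedSolution`, by its constancy on closed intervals where `x > 0`. -/
structure IsSkorokhodReflection (T : ℝ) (u x ℓ : ℝ → ℝ) : Prop where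
  continuousOn : ContinuousOn x (Icc 0 T)
  continuousOn_regulator : ContinuousOn ℓ (Icc 0 T)
  eq_add : ∀ t ∈ Icc 0 T, x t = u t + ℓ t
  nonneg : ∀ t ∈ Icc 0 T, 0 ≤ x t
  monotoneOn_regulator : MonotoneOn ℓ (Icc 0 T)
  regulator_zero : ℓ 0 = 0
  regulator_eq_of_pos : ∀ s t : ℝ, 0 ≤ s → s ≤ t → t ≤ T → (∀ r ∈ Icc s t, 0 < x r) → ℓ t = ℓ s

lemma IsReflectedSolution.isSkorokhodReflection {T β : ℝ} {k : ℕ} {y x ℓ : ℝ → ℝ}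
    (h : IsReflectedSolution T β k y x ℓ) :
    IsSkorokhodReflection T (fun t => y t + ∫ s in (0 : ℝ)..t, -β * x s ^ k) x ℓ := by
  obtain ⟨hx, hℓ, heq, hnonneg, hmono, hzero, hflat⟩ := h
  exact ⟨hx, hℓ, heq, hnonneg, hmono, hzero, hflat⟩

namespace IsSkorokhodReflection

variable {T s t : ℝ} {u x ℓ u₁ x₁ ℓ₁ u₂ x₂ ℓ₂ g y₁ y₂ : ℝ → ℝ}

lemma apply_zero (h : IsSkorokhodReflection T u x ℓ) (hT : 0 ≤ T) : x 0 = u 0 := by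
  simpa [h.regulator_zero] using h.eq_add 0 (left_mem_Icc.mpr hT)

lemma regulator_eq_of_pos_Ioc (h : IsSkorokhodReflection T u x ℓ) (hs : 0 ≤ s) (hst : s ≤ t)
    (ht : t ≤ T) (hpos : ∀ r ∈ Ioc s t, 0 < x r) : ℓ t = ℓ s := by
  rcases hst.eq_or_lt with rfl | hlt
  · rfl
  have hlim : Tendsto ℓ (𝓝[>] s) (𝓝 (ℓ s)) := by
    rw [← nhdsWithin_Ioc_eq_nhdsGT hlt]
    exact (h.continuousOn_regulator s ⟨hs, hst.trans ht⟩).mono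
      (Ioc_subset_Icc_self.trans (Icc_subset_Icc hs ht))
  refine tendsto_nhds_unique (tendsto_const_nhds.congr' ?_) hlim
  filter_upwards [Ioc_mem_nhdsGT hlt] with r hr
  exact h.regulator_eq_of_pos r t (hs.trans hr.1.le) hr.2 ht fun q hq =>
    hpos q ⟨hr.1.trans_le hq.1, hq.2⟩

lemma sub_sub_sub_le_of_lt (h₁ : IsSkorokhodReflection T u₁ x₁ ℓ₁)
    (h₂ : IsSkorokhodReflection T u₂ x₂ ℓ₂) (hs : 0 ≤ s) (hst : s ≤ t) (ht : t ≤ T)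
    (hlt : ∀ r ∈ Ioc s t, x₂ r < x₁ r) :
    (x₁ t - x₂ t) - (x₁ s - x₂ s) ≤ (u₁ t - u₂ t) - (u₁ s - u₂ s) := by
  have hsT : s ∈ Icc 0 T := ⟨hs, hst.trans ht⟩
  have htT : t ∈ Icc 0 T := ⟨hs.trans hst, ht⟩
  have hℓ₁ : ℓ₁ t = ℓ₁ s := h₁.regulator_eq_of_pos_Ioc hs hst ht fun r hr =>
    (h₂.nonneg r ⟨hs.trans hr.1.le, hr.2.trans ht⟩).trans_lt (hlt r hr)
  have hℓ₂ : ℓ₂ s ≤ ℓ₂ t := h₂.monotoneOn_regulator hsT htT hst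
  linarith [h₁.eq_add s hsT, h₁.eq_add t htT, h₂.eq_add s hsT, h₂.eq_add t htT]

lemma intervalIntegrable_comp (h : IsSkorokhodReflection T u x ℓ) (hg : ContinuousOn g (Ici 0))
    (hs : s ∈ Icc 0 T) (ht : t ∈ Icc 0 T) :
    IntervalIntegrable (fun r => g (x r)) volume s t :=
  ((hg.comp h.continuousOn h.nonneg).mono (uIcc_subset_Icc hs ht)).intervalIntegrable

lemma integral_comp_le_of_lt (h₁ : IsSkorokhodReflection T u₁ x₁ ℓ₁)
    (h₂ : IsSkorokhodReflection T u₂ x₂ ℓ₂) (hg : ContinuousOn g (Ici 0))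
    (hanti : AntitoneOn g (Ici 0)) (hs : 0 ≤ s) (hst : s ≤ t) (ht : t ≤ T)
    (hlt : ∀ r ∈ Ioc s t, x₂ r < x₁ r) :
    ∫ r in s..t, g (x₁ r) ≤ ∫ r in s..t, g (x₂ r) := by
  have hsT : s ∈ Icc 0 T := ⟨hs, hst.trans ht⟩
  have htT : t ∈ Icc 0 T := ⟨hs.trans hst, ht⟩
  refine intervalIntegral.integral_mono_on_of_le_Ioo hst (h₁.intervalIntegrable_comp hg hsT htT)
    (h₂.intervalIntegrable_comp hg hsT htT) fun r hr => ?_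
  have hrT : r ∈ Icc 0 T := ⟨hs.trans hr.1.le, hr.2.le.trans ht⟩
  exact hanti (h₂.nonneg r hrT) (h₁.nonneg r hrT) (hlt r (Ioo_subset_Ioc_self hr)).le

lemma sub_le_two_mul_of_antitoneOn_drift (hg : ContinuousOn g (Ici 0))
    (hanti : AntitoneOn g (Ici 0))
    (h₁ : IsSkorokhodReflection T (fun t => y₁ t + ∫ s in (0 : ℝ)..t, g (x₁ s)) x₁ ℓ₁)
    (h₂ : IsSkorokhodReflection T (fun t => y₂ t + ∫ s in (0 : ℝ)..t, g (x₂ s)) x₂ ℓ₂)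
    {M : ℝ} (hM : ∀ s ∈ Icc 0 T, |y₁ s - y₂ s| ≤ M) (ht : t ∈ Icc 0 T) :
    x₁ t - x₂ t ≤ 2 * M := by
  have hsub : Icc 0 t ⊆ Icc 0 T := Icc_subset_Icc_right ht.2
  have h0 : (0 : ℝ) ∈ Icc 0 T := left_mem_Icc.mpr (ht.1.trans ht.2)
  obtain ⟨s, hs, hstart, hlt⟩ := exists_mem_Icc_forall_mem_Ioc_lt ht.1
    (h₁.continuousOn.mono hsub) (h₂.continuousOn.mono hsub)
  have hsT : s ∈ Icc 0 T := hsub hs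
  have hgap := h₁.sub_sub_sub_le_of_lt h₂ hs.1 hs.2 ht.2 hlt
  have hdrift := h₁.integral_comp_le_of_lt h₂ hg hanti hs.1 hs.2 ht.2 hlt
  have hsplit₁ := intervalIntegral.integral_add_adjacent_intervals
    (h₁.intervalIntegrable_comp hg h0 hsT) (h₁.intervalIntegrable_comp hg hsT ht)
  have hsplit₂ := intervalIntegral.integral_add_adjacent_intervals
    (h₂.intervalIntegrable_comp hg h0 hsT) (h₂.intervalIntegrable_comp hg hsT ht)
  have hinit : (x₁ s - x₂ s) - (y₁ s - y₂ s) ≤ M := by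
    rcases hstart with rfl | hle
    · have hx₁ : x₁ 0 = y₁ 0 := by simpa using h₁.apply_zero h0.2
      have hx₂ : x₂ 0 = y₂ 0 := by simpa using h₂.apply_zero h0.2
      simpa [hx₁, hx₂] using (abs_nonneg _).trans (hM 0 h0)
    · linarith [(abs_le.mp (hM s hsT)).1]
  linarith [(abs_le.mp (hM t ht)).2]

end IsSkorokhodReflection

lemma antitoneOn_neg_mul_pow {R : Type*} [Ring R] [PartialOrder R] [IsOrderedRing R] {c : R}
    (hc : 0 ≤ c) (k : ℕ) : AntitoneOn (fun x : R => -c * x ^ k) (Ici 0) :=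
  fun _ ha _ _ hab => mul_le_mul_of_nonpos_left (pow_le_pow_left₀ ha hab k) (neg_nonpos.mpr hc)

theorem reflected_integral_equation_lipschitz_general
    {T : ℝ} {g y₁ y₂ x₁ ℓ₁ x₂ ℓ₂ : ℝ → ℝ}
    (hg : ContinuousOn g (Ici 0)) (hanti : AntitoneOn g (Ici 0))
    (h₁ : IsSkorokhodReflection T (fun t => y₁ t + ∫ s in (0 : ℝ)..t, g (x₁ s)) x₁ ℓ₁)
    (h₂ : IsSkorokhodReflection T (fun t => y₂ t + ∫ s in (0 : ℝ)..t, g (x₂ s)) x₂ ℓ₂)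
    {M : ℝ} (hM : ∀ s ∈ Icc 0 T, |y₁ s - y₂ s| ≤ M) :
    ∀ t ∈ Icc 0 T, |x₁ t - x₂ t| ≤ 2 * M := by
  intro t ht
  have hM_symm : ∀ s ∈ Icc 0 T, |y₂ s - y₁ s| ≤ M := fun s hs =>
    abs_sub_comm (y₁ s) (y₂ s) ▸ hM s hs
  exact abs_sub_le_iff.mpr ⟨h₁.sub_le_two_mul_of_antitoneOn_drift hg hanti h₂ hM ht,
    h₂.sub_le_two_mul_of_antitoneOn_drift hg hanti h₁ hM_symm ht⟩

/-- Lipschitz continuity of the solution map of the reflected integral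
equation with polynomial drift `g(x) = -β x^k`: if both solutions are bounded by `R`
on `[0,T]` and `L = β k R^{k-1}`, then
`sup_{[0,T]} |x₁ - x₂| ≤ 2 e^{2LT} sup_{[0,T]} |y₁ - y₂|`. -/
theorem reflected_integral_equation_lipschitz
    (T β : ℝ) (k : ℕ) (hT : 0 < T) (hβ : 0 < β) (hk : 1 ≤ k)
    (y₁ y₂ x₁ ℓ₁ x₂ ℓ₂ : ℝ → ℝ)
    (hy₁ : ContinuousOn y₁ (Set.Icc 0 T)) (hy₂ : ContinuousOn y₂ (Set.Icc 0 T))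
    (hy₁0 : 0 ≤ y₁ 0) (hy₂0 : 0 ≤ y₂ 0)
    (h₁ : IsReflectedSolution T β k y₁ x₁ ℓ₁)
    (h₂ : IsReflectedSolution T β k y₂ x₂ ℓ₂)
    (R : ℝ) (hR : 0 < R)
    (hbd₁ : ∀ t ∈ Set.Icc (0 : ℝ) T, x₁ t ≤ R)
    (hbd₂ : ∀ t ∈ Set.Icc (0 : ℝ) T, x₂ t ≤ R)
    (L : ℝ) (hL : L = β * k * R ^ (k - 1)) :
    ∀ t ∈ Set.Icc (0 : ℝ) T,
      |x₁ t - x₂ t| ≤ 2 * Real.exp (2 * L * T) *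
        sSup ((fun s : ℝ => |y₁ s - y₂ s|) '' Set.Icc 0 T) := by
  have hexp : 1 ≤ Real.exp (2 * L * T) := Real.one_le_exp (by rw [hL]; positivity)
  have hsup : ∀ s ∈ Icc 0 T, |y₁ s - y₂ s| ≤ sSup ((fun s => |y₁ s - y₂ s|) '' Icc 0 T) :=
    fun s hs => le_csSup (isCompact_Icc.bddAbove_image (hy₁.sub hy₂).abs) (mem_image_of_mem _ hs)
  simp only [mul_assoc 2 (Real.exp _)]
  exact reflected_integral_equation_lipschitz_general (by fun_prop)
    (antitoneOn_neg_mul_pow hβ.le k) h₁.isSkorokhodReflection h₂.isSkorokhodReflection fun s hs =>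
      (hsup s hs).trans (le_mul_of_one_le_left ((abs_nonneg _).trans (hsup s hs)) hexp)
end

section
/- Suppose c < 0 and 0 < γ < h. Then lim_{α↓0} μ·(1 − ρ(α))·J(α) = 1 and lim_{α↓0} μ²·(1 − ρ(α))²·J₁(α) = 1, where 1 − ρ(α) = (−c)·α^γ. -/
open Filter Set Topology MeasureTheory

/-- `J(α) = ∫_0^∞ exp{λ(α) ∫_0^x F̄(α u) du - μ x} dx` for the `M/M/1+GI` queue
with `ρ(α) = 1 + c α^γ`, `λ(α) = ρ(α) μ`, patience CDF `x ↦ F(α x)`. -/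
noncomputable def Jq (F : ℝ → ℝ) (μ c γ α : ℝ) : ℝ :=
  ∫ x in Set.Ioi (0 : ℝ),
    Real.exp ((1 + c * α ^ γ) * μ * (∫ u in (0 : ℝ)..x, (1 - F (α * u))) - μ * x)

/-- `J₁(α) = ∫_0^∞ x exp{λ(α) ∫_0^x F̄(α u) du - μ x} dx`. -/
noncomputable def J1q (F : ℝ → ℝ) (μ c γ α : ℝ) : ℝ :=
  ∫ x in Set.Ioi (0 : ℝ),
    x * Real.exp ((1 + c * α ^ γ) * μ * (∫ u in (0 : ℝ)..x, (1 - F (α * u))) - μ * x)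

/-! Write `D z = ∫₀ᶻ F`. A change of variables gives `∫₀ˣ F̄(αu) du = x - α⁻¹ D(αx)`, so the
exponent of `J` and `J₁` is exactly `-δx - λ α⁻¹ D(αx)` with `δ = μ(1 - ρ)`. Substituting
`x = y / δ` turns it into `-y - λ α⁻¹ D(αy / δ)`, which is at most `-y` because `F ≥ 0`. As
`F(x) = O(x ^ k)` at `0⁺`, the correction term is
`O(α ^ k / δ ^ (k + 1)) = O((α ^ h / δ) ^ (k + 1))`, and this vanishes because
`α ^ h = o(1 - ρ(α))`. By dominated convergence the rescaled integrals tend to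
`∫₀^∞ y ^ (s - 1) e ^ (-y) dy = Γ(s)`, with `s = 1` for `J` and `s = 2` for `J₁`. -/

section PowerOrder

open Asymptotics

variable {E : Type*} [NormedAddCommGroup E] [NormedSpace ℝ E]

theorem isBigO_pow_of_iteratedDerivWithin_eq_zero {f : ℝ → E} {s : Set ℝ} {x₀ : ℝ} {n : ℕ}
    (hs : Convex ℝ s) (hx₀ : x₀ ∈ s) (hf : ContDiffOn ℝ n f s)
    (h0 : ∀ j < n, iteratedDerivWithin j f s x₀ = 0) :
    f =O[𝓝[s] x₀] fun x => (x - x₀) ^ n := by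
  have htaylor : ∀ x, taylorWithinEval f n s x₀ x =
      (x - x₀) ^ n • ((n.factorial : ℝ)⁻¹ • iteratedDerivWithin n f s x₀) := by
    intro x
    rw [taylor_within_apply, Finset.sum_range_succ, Finset.sum_eq_zero fun j hj => by
      rw [h0 j (Finset.mem_range.1 hj), smul_zero], zero_add, mul_comm, mul_smul]
  have hlead : taylorWithinEval f n s x₀ =O[𝓝[s] x₀] fun x => (x - x₀) ^ n :=
    .of_bound ‖(n.factorial : ℝ)⁻¹ • iteratedDerivWithin n f s x₀‖ <| .of_forall fun x => by
      rw [htaylor, norm_smul, mul_comm]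
  simpa only [sub_add_cancel] using (taylor_isLittleO hs hx₀ hf).isBigO.add hlead

theorem isBigO_intervalIntegral_rpow_add_one {f : ℝ → E} {p : ℝ} (hp : 0 ≤ p)
    (hf : f =O[𝓝[>] 0] fun x => x ^ p) :
    (fun z => ∫ u in (0 : ℝ)..z, f u) =O[𝓝[>] 0] fun z => z ^ (p + 1) := by
  obtain ⟨C, hC, hfC⟩ := hf.exists_pos
  obtain ⟨ε, hε, hbound⟩ := mem_nhdsGT_iff_exists_Ioo_subset.1 hfC.bound
  refine .of_bound C ?_
  filter_upwards [Ioo_mem_nhdsGT hε] with z ⟨hz, hzε⟩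
  have hf_le : ∀ u ∈ uIoc 0 z, ‖f u‖ ≤ C * z ^ p := by
    intro u hu
    obtain ⟨hu, huz⟩ := uIoc_of_le hz.le ▸ hu
    calc ‖f u‖ ≤ C * ‖u ^ p‖ := hbound ⟨hu, huz.trans_lt hzε⟩
      _ = C * u ^ p := by rw [Real.norm_of_nonneg (by positivity)]
      _ ≤ C * z ^ p := by gcongr
  calc ‖∫ u in (0 : ℝ)..z, f u‖ ≤ C * z ^ p * |z - 0| :=
        intervalIntegral.norm_integral_le_of_norm_le_const hf_le
    _ = C * ‖z ^ (p + 1)‖ := by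
        rw [sub_zero, abs_of_pos hz, Real.norm_of_nonneg (by positivity),
          Real.rpow_add_one hz.ne', mul_assoc]

end PowerOrder

section Primitive

variable {E : Type*} [NormedAddCommGroup E] {f : ℝ → E} {a b : ℝ}

theorem intervalIntegrable_of_locallyIntegrableOn_Ici (hf : LocallyIntegrableOn f (Ici a))
    (hab : a ≤ b) : IntervalIntegrable f volume a b :=
  (intervalIntegrable_iff_integrableOn_Icc_of_le hab).2
    (hf.integrableOn_compact_subset Icc_subset_Ici_self isCompact_Icc)

theorem continuousOn_primitive_Ioi [NormedSpace ℝ E] (hf : LocallyIntegrableOn f (Ici a)) :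
    ContinuousOn (fun z => ∫ u in a..z, f u) (Ioi a) := by
  intro z hz
  have haz : a ≤ z + 1 := by linarith [mem_Ioi.1 hz]
  have hprim := intervalIntegral.continuousOn_primitive_interval'
    (intervalIntegrable_of_locallyIntegrableOn_Ici hf haz) left_mem_uIcc
  rw [uIcc_of_le haz] at hprim
  exact (hprim.continuousAt (Icc_mem_nhds hz (lt_add_one z))).continuousWithinAt

end Primitive

section RpowNearZero

open Asymptotics

theorem tendsto_rpow_nhdsGT_zero {p : ℝ} (hp : 0 < p) :
    Tendsto (fun x : ℝ => x ^ p) (𝓝[>] 0) (𝓝 0) := by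
  simpa only [Real.zero_rpow hp.ne'] using
    (Real.continuousAt_rpow_const 0 p (.inr hp.le)).tendsto.mono_left nhdsWithin_le_nhds

theorem isLittleO_rpow_rpow_nhdsGT_zero {a b : ℝ} (hab : a < b) :
    (fun x : ℝ => x ^ b) =o[𝓝[>] 0] fun x => x ^ a := by
  refine (isLittleO_iff_tendsto' ?_).2 ((tendsto_rpow_nhdsGT_zero (sub_pos.2 hab)).congr' ?_)
  · filter_upwards [self_mem_nhdsWithin] with x hx hxa
    exact absurd hxa (Real.rpow_pos_of_pos hx a).ne'
  · filter_upwards [self_mem_nhdsWithin] with x hx using Real.rpow_sub hx b a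

end RpowNearZero

section RescaledGammaIntegral

theorem rpow_smul_integral_rpow_smul_Ioi {E : Type*} [NormedAddCommGroup E] [NormedSpace ℝ E]
    (φ : ℝ → E) (s : ℝ) {δ : ℝ} (hδ : 0 < δ) :
    δ ^ s • ∫ x in Ioi (0 : ℝ), x ^ (s - 1) • φ x =
      ∫ y in Ioi (0 : ℝ), y ^ (s - 1) • φ (y / δ) := by
  have hscale := integral_comp_mul_left_Ioi' (fun y => y ^ (s - 1) • φ (y / δ)) 0 hδ
  rw [mul_zero, ← integral_smul] at hscale
  rw [← hscale, ← integral_smul]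
  refine setIntegral_congr_fun measurableSet_Ioi fun x hx => ?_
  have hδs : δ ^ s = δ * δ ^ (s - 1) := by rw [Real.rpow_sub_one hδ.ne', mul_div_cancel₀ _ hδ.ne']
  simp only [mul_div_cancel_left₀ x hδ.ne', Real.mul_rpow hδ.le (le_of_lt hx), hδs, mul_smul]

theorem tendsto_rpow_mul_integral_rpow_mul_exp {ι : Type*} {l : Filter ι}
    [l.IsCountablyGenerated] {δ : ι → ℝ} {g : ι → ℝ → ℝ} {s : ℝ} (hs : 0 < s)
    (hδ : ∀ᶠ i in l, 0 < δ i) (hg_cont : ∀ᶠ i in l, ContinuousOn (g i) (Ioi 0))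
    (hg_le : ∀ᶠ i in l, ∀ x > 0, g i x ≤ -(δ i * x))
    (hg_lim : ∀ y > 0, Tendsto (fun i => g i (y / δ i)) l (𝓝 (-y))) :
    Tendsto (fun i => δ i ^ s * ∫ x in Ioi (0 : ℝ), x ^ (s - 1) * Real.exp (g i x)) l
      (𝓝 (Real.Gamma s)) := by
  have hGamma : IntegrableOn (fun y : ℝ => y ^ (s - 1) * Real.exp (-y)) (Ioi 0) := by
    simpa only [mul_comm] using Real.GammaIntegral_convergent hs
  suffices hresc : Tendsto (fun i => ∫ y in Ioi (0 : ℝ), y ^ (s - 1) * Real.exp (g i (y / δ i))) l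
      (𝓝 (∫ y in Ioi (0 : ℝ), y ^ (s - 1) * Real.exp (-y))) by
    rw [Real.Gamma_eq_integral hs]
    simp only [mul_comm (Real.exp _)]
    refine hresc.congr' ?_
    filter_upwards [hδ] with i hi
    exact (rpow_smul_integral_rpow_smul_Ioi (fun x => Real.exp (g i x)) s hi).symm
  refine tendsto_integral_filter_of_dominated_convergence _ ?_ ?_ hGamma ?_
  · filter_upwards [hδ, hg_cont] with i hi hcont
    refine ContinuousOn.aestronglyMeasurable (.mul ?_ (.rexp ?_)) measurableSet_Ioi
    · exact continuousOn_id.rpow_const fun y hy => .inl (ne_of_gt hy)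
    · exact hcont.comp (continuousOn_id.div_const _) fun y hy => div_pos hy hi
  · filter_upwards [hδ, hg_le] with i hi hle
    refine ae_restrict_of_forall_mem measurableSet_Ioi fun y hy => ?_
    have hy : 0 < y := hy
    rw [Real.norm_of_nonneg (by positivity)]
    gcongr
    simpa only [mul_div_cancel₀ y hi.ne'] using hle _ (div_pos hy hi)
  · exact ae_restrict_of_forall_mem measurableSet_Ioi fun y hy =>
      ((Real.continuous_exp.tendsto _).comp (hg_lim y hy)).const_mul _

end RescaledGammaIntegral

section Queue

open Asymptotics

/-- The exponent `λ ∫_0^x F̄(α u) du - μ x` of the integrands of `J(α)` and `J₁(α)`, with arrival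
rate `λ = r μ` at an arbitrary load `r`. -/
noncomputable def queueExponent (F : ℝ → ℝ) (μ α r x : ℝ) : ℝ :=
  r * μ * (∫ u in (0 : ℝ)..x, (1 - F (α * u))) - μ * x

/-- The moment `∫_0^∞ x^(s-1) exp{λ ∫_0^x F̄(α u) du - μ x} dx` with arrival rate `λ = r μ`, indexed
like the Gamma integral: `s = 1` gives `J(α)` and `s = 2` gives `J₁(α)`. -/
noncomputable def queueMoment (F : ℝ → ℝ) (μ α r s : ℝ) : ℝ :=
  ∫ x in Ioi (0 : ℝ), x ^ (s - 1) * Real.exp (queueExponent F μ α r x)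

variable {F : ℝ → ℝ} {μ α r x p s : ℝ}

theorem Jq_eq_queueMoment (F : ℝ → ℝ) (μ c γ α : ℝ) :
    Jq F μ c γ α = queueMoment F μ α (1 + c * α ^ γ) 1 := by
  simp only [Jq, queueMoment, queueExponent, sub_self, Real.rpow_zero, one_mul]

theorem J1q_eq_queueMoment (F : ℝ → ℝ) (μ c γ α : ℝ) :
    J1q F μ c γ α = queueMoment F μ α (1 + c * α ^ γ) 2 := by
  norm_num [J1q, queueMoment, queueExponent]

theorem queueExponent_eq_neg_sub_primitive (hF_int : LocallyIntegrableOn F (Ici 0)) (hα : 0 < α)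
    (hx : 0 ≤ x) :
    queueExponent F μ α r x =
      -(μ * (1 - r) * x) - r * μ * (α⁻¹ * ∫ u in (0 : ℝ)..α * x, F u) := by
  have hcomp : IntervalIntegrable (fun u => F (α * u)) volume 0 x := by
    have hF_Icc := intervalIntegrable_of_locallyIntegrableOn_Ici hF_int (mul_nonneg hα.le hx)
    simpa [hα.ne'] using hF_Icc.comp_mul_left (c := α)
  rw [queueExponent, intervalIntegral.integral_sub intervalIntegrable_const hcomp,
    intervalIntegral.integral_comp_mul_left F hα.ne', mul_zero, smul_eq_mul,
    intervalIntegral.integral_const, sub_zero, smul_eq_mul]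
  ring

theorem queueExponent_le (hF_int : LocallyIntegrableOn F (Ici 0)) (hF_nonneg : ∀ u, 0 ≤ u → 0 ≤ F u)
    (hμ : 0 ≤ μ) (hr : 0 ≤ r) (hα : 0 < α) (hx : 0 ≤ x) :
    queueExponent F μ α r x ≤ -(μ * (1 - r) * x) := by
  have hprim : 0 ≤ ∫ u in (0 : ℝ)..α * x, F u :=
    intervalIntegral.integral_nonneg (by positivity) fun u hu => hF_nonneg u hu.1
  rw [queueExponent_eq_neg_sub_primitive hF_int hα hx]
  exact sub_le_self _ (by positivity)

theorem continuousOn_queueExponent (hF_int : LocallyIntegrableOn F (Ici 0)) (hα : 0 < α) :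
    ContinuousOn (queueExponent F μ α r) (Ioi 0) := by
  have hprim : ContinuousOn (fun x => ∫ u in (0 : ℝ)..α * x, F u) (Ioi 0) :=
    (continuousOn_primitive_Ioi hF_int).comp (continuousOn_const.mul continuousOn_id)
      fun x hx => mul_pos hα hx
  have hexp : ContinuousOn (fun x => -(μ * (1 - r) * x) -
      r * μ * (α⁻¹ * ∫ u in (0 : ℝ)..α * x, F u)) (Ioi 0) := by fun_prop
  exact hexp.congr fun x hx => queueExponent_eq_neg_sub_primitive hF_int hα (le_of_lt hx)

theorem tendsto_inv_mul_primitive_comp_div {δ : ℝ → ℝ} {y : ℝ} (hp : 0 < p)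
    (hF_bigO : F =O[𝓝[>] 0] fun x => x ^ p) (hδ : ∀ᶠ α in 𝓝[>] 0, 0 < δ α)
    (hh : (fun α : ℝ => α ^ (p / (p + 1))) =o[𝓝[>] 0] δ) (hy : 0 < y) :
    Tendsto (fun α => α⁻¹ * ∫ u in (0 : ℝ)..α * (y / δ α), F u) (𝓝[>] 0) (𝓝 0) := by
  have hp1 : 0 < p + 1 := by positivity
  have hα_div : Tendsto (fun α => α / δ α) (𝓝[>] 0) (𝓝 0) :=
    (((IsBigO.id_rpow_of_le_one ((div_lt_one hp1).2 (lt_add_one p)).le).mono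
      (nhdsWithin_mono 0 Ioi_subset_Ici_self)).trans_isLittleO hh).tendsto_div_nhds_zero
  have hz : Tendsto (fun α => α * (y / δ α)) (𝓝[>] 0) (𝓝[>] 0) := by
    refine tendsto_nhdsWithin_iff.2 ⟨?_, ?_⟩
    · simpa only [mul_zero, mul_div_left_comm] using hα_div.const_mul y
    · filter_upwards [self_mem_nhdsWithin, hδ] with α hα hδα using mul_pos hα (div_pos hy hδα)
  have hO := (isBigO_refl (fun α : ℝ => α⁻¹) (𝓝[>] 0)).mul
    ((isBigO_intervalIntegral_rpow_add_one hp.le hF_bigO).comp_tendsto hz)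
  have hratio : Tendsto (fun α => y ^ (p + 1) * (α ^ (p / (p + 1)) / δ α) ^ (p + 1))
      (𝓝[>] 0) (𝓝 0) := by
    simpa only [Real.zero_rpow hp1.ne', mul_zero] using
      (hh.tendsto_div_nhds_zero.rpow_const (.inr hp1.le)).const_mul (y ^ (p + 1))
  refine hO.trans_tendsto (hratio.congr' ?_)
  filter_upwards [self_mem_nhdsWithin, hδ] with α hα hδα
  have hα : 0 < α := hα
  simp only [Function.comp_apply]
  rw [Real.div_rpow (by positivity) hδα.le, ← Real.rpow_mul hα.le, div_mul_cancel₀ p hp1.ne',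
    Real.mul_rpow hα.le (by positivity), Real.div_rpow hy.le hδα.le, Real.rpow_add_one hα.ne']
  field_simp

theorem tendsto_rpow_mul_queueMoment {ρ : ℝ → ℝ} (hF_int : LocallyIntegrableOn F (Ici 0))
    (hF_nonneg : ∀ x, 0 ≤ x → 0 ≤ F x) (hF_bigO : F =O[𝓝[>] 0] fun x => x ^ p) (hp : 0 < p)
    (hμ : 0 < μ) (hs : 0 < s) (hρ : ∀ᶠ α in 𝓝[>] 0, ρ α ∈ Ico 0 1)
    (hh : (fun α : ℝ => α ^ (p / (p + 1))) =o[𝓝[>] 0] fun α => 1 - ρ α) :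
    Tendsto (fun α => (μ * (1 - ρ α)) ^ s * queueMoment F μ α (ρ α) s) (𝓝[>] 0)
      (𝓝 (Real.Gamma s)) := by
  have hδ : ∀ᶠ α in 𝓝[>] 0, 0 < μ * (1 - ρ α) := by
    filter_upwards [hρ] with α hρα using mul_pos hμ (sub_pos.2 hρα.2)
  refine tendsto_rpow_mul_integral_rpow_mul_exp hs hδ ?_ ?_ fun y hy => ?_
  · filter_upwards [self_mem_nhdsWithin] with α hα using continuousOn_queueExponent hF_int hα
  · filter_upwards [self_mem_nhdsWithin, hρ] with α hα hρα x hx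
    exact queueExponent_le hF_int hF_nonneg hμ.le hρα.1 hα hx.le
  · have hcorr : Tendsto (fun α => ρ α * μ *
        (α⁻¹ * ∫ u in (0 : ℝ)..α * (y / (μ * (1 - ρ α))), F u)) (𝓝[>] 0) (𝓝 0) := by
      refine bdd_le_mul_tendsto_zero (b := 0) (B := μ) ?_ ?_
        (tendsto_inv_mul_primitive_comp_div hp hF_bigO hδ (hh.const_mul_right hμ.ne') hy)
      · filter_upwards [hρ] with α hρα using mul_nonneg hρα.1 hμ.le
      · filter_upwards [hρ] with α hρα using mul_le_of_le_one_left hμ.le hρα.2.le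
    rw [← sub_zero (-y)]
    refine (hcorr.const_sub (-y)).congr' ?_
    filter_upwards [self_mem_nhdsWithin, hδ] with α hα hδα
    rw [queueExponent_eq_neg_sub_primitive hF_int hα (div_pos hy hδα).le, mul_div_cancel₀ y hδα.ne']

theorem mm1gi_J_limits_underloaded_general {γ c : ℝ} (hF_int : LocallyIntegrableOn F (Ici 0))
    (hF_nonneg : ∀ x, 0 ≤ x → 0 ≤ F x) (hF_bigO : F =O[𝓝[>] 0] fun x => x ^ p) (hp : 0 < p)
    (hμ : 0 < μ) (hγ : 0 < γ) (hc : c < 0) (hγh : γ < p / (p + 1)) :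
    Tendsto (fun α : ℝ => μ * ((-c) * α ^ γ) * Jq F μ c γ α) (𝓝[>] (0 : ℝ)) (𝓝 1) ∧
    Tendsto (fun α : ℝ => μ ^ 2 * ((-c) * α ^ γ) ^ 2 * J1q F μ c γ α) (𝓝[>] (0 : ℝ)) (𝓝 1) := by
  have hgap : ∀ α : ℝ, 1 - (1 + c * α ^ γ) = -c * α ^ γ := fun α => by ring
  have hρ_lim : Tendsto (fun α : ℝ => 1 + c * α ^ γ) (𝓝[>] 0) (𝓝 1) := by
    simpa using ((tendsto_rpow_nhdsGT_zero hγ).const_mul c).const_add 1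
  have hρ : ∀ᶠ α : ℝ in 𝓝[>] 0, 1 + c * α ^ γ ∈ Ico 0 1 := by
    filter_upwards [self_mem_nhdsWithin, hρ_lim.eventually_const_le one_pos] with α hα hα'
    exact ⟨hα', by linarith [mul_neg_of_neg_of_pos hc (Real.rpow_pos_of_pos hα γ)]⟩
  have hh : (fun α : ℝ => α ^ (p / (p + 1))) =o[𝓝[>] 0] fun α => 1 - (1 + c * α ^ γ) := by
    simp only [hgap]
    exact (isLittleO_rpow_rpow_nhdsGT_zero hγh).const_mul_right (neg_ne_zero.2 hc.ne)
  have hmoment := fun {s : ℝ} (hs : 0 < s) =>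
    tendsto_rpow_mul_queueMoment hF_int hF_nonneg hF_bigO hp hμ hs hρ hh
  simp only [hgap] at hmoment
  constructor
  · simpa only [Jq_eq_queueMoment, Real.rpow_one, Real.Gamma_one] using hmoment one_pos
  · simpa only [J1q_eq_queueMoment, ← mul_pow, Real.rpow_two, Real.Gamma_two] using
      hmoment two_pos

end Queue

/-- in the underloaded regime (`c < 0`, `0 < γ < h = k/(k+1)`),
`μ (1 - ρ(α)) J(α) → 1` and `μ² (1 - ρ(α))² J₁(α) → 1` as `α ↓ 0`,
where `1 - ρ(α) = (-c) α^γ`. -/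
theorem mm1gi_J_limits_underloaded
    (k : ℕ) (hk : 1 ≤ k)
    (F : ℝ → ℝ)
    (hF_mono : Monotone F)
    (hF_zero : ∀ x ≤ (0 : ℝ), F x = 0)
    (hF_range : ∀ x, 0 ≤ x → 0 ≤ F x ∧ F x < 1)
    (hF_lim : Tendsto F atTop (𝓝 1))
    (hF_smooth : ContDiffOn ℝ k F (Set.Ici 0))
    (hF_derivs : ∀ j < k, iteratedDerivWithin j F (Set.Ici 0) 0 = 0)
    (hF_k : 0 < iteratedDerivWithin k F (Set.Ici 0) 0)
    (μ γ c : ℝ) (hμ : 0 < μ) (hγ : 0 < γ)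
    (hc : c < 0) (hγh : γ < (k : ℝ) / (k + 1))
    (hJ : ∀ᶠ α in 𝓝[>] (0 : ℝ), IntegrableOn
      (fun x : ℝ => Real.exp ((1 + c * α ^ γ) * μ *
        (∫ u in (0 : ℝ)..x, (1 - F (α * u))) - μ * x)) (Set.Ioi 0))
    (hJ1 : ∀ᶠ α in 𝓝[>] (0 : ℝ), IntegrableOn
      (fun x : ℝ => x * Real.exp ((1 + c * α ^ γ) * μ *
        (∫ u in (0 : ℝ)..x, (1 - F (α * u))) - μ * x)) (Set.Ioi 0)) :
    Tendsto (fun α : ℝ => μ * ((-c) * α ^ γ) * Jq F μ c γ α)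
      (𝓝[>] (0 : ℝ)) (𝓝 1) ∧
    Tendsto (fun α : ℝ => μ ^ 2 * ((-c) * α ^ γ) ^ 2 * J1q F μ c γ α)
      (𝓝[>] (0 : ℝ)) (𝓝 1) := by
  have hF_bigO : F =O[𝓝[≥] 0] fun x => x ^ (k : ℝ) := by
    simpa using isBigO_pow_of_iteratedDerivWithin_eq_zero (convex_Ici 0) self_mem_Ici hF_smooth
      hF_derivs
  exact mm1gi_J_limits_underloaded_general (hF_mono.locallyIntegrable.locallyIntegrableOn _)
    (fun x hx => (hF_range x hx).1) (hF_bigO.mono (nhdsWithin_mono 0 Ioi_subset_Ici_self))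
    (by exact_mod_cast hk) hμ hγ hc hγh
end
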